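/- arXiv:2506.22961 — 3 statements merged into one kernel-verified Lean document; each statement's English description precedes it below -/
import Mathlib

section
/- Let m be a natural number and let M be any 2^m × 2^m complex matrix with rows and columns indexed by {0,1}^m. Then (1/2^{2m}) · Σ_{a,b ∈ {0,1}^m} U_{a,b} M U_{a,b}† = (Tr M / 2^m) · I, where I is the 2^m × 2^m identity matrix. (This is the general, mixed-state form of the quantum one-time pad lemma, used to argue that one-time-pad encryptions of arbitrary quantum states are maximally mixed.) -/
open scoped BigOperators
open Matrix

/-- The `m`-qubit Pauli operator `X^a Z^b` implementing the quantum one-time pad: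
its `(x, y)` entry is `(-1)^(b·y)` if `x = y ⊕ a` and `0` otherwise. -/
noncomputable def pauliU (m : ℕ) (a b : Fin m → ZMod 2) :
    Matrix (Fin m → ZMod 2) (Fin m → ZMod 2) ℂ :=
  fun x y => if x = y + a then (-1 : ℂ) ^ ((∑ i, b i * y i : ZMod 2)).val else 0

theorem neg_one_pow_val_add (s t : ZMod 2) :
    (-1 : ℂ) ^ (s + t).val = (-1) ^ s.val * (-1) ^ t.val := by
  rw [ZMod.val_add, ← pow_add, neg_one_pow_eq_pow_mod_two (n := s.val + t.val)]

theorem neg_one_pow_val_sum {ι : Type*} (s : Finset ι) (f : ι → ZMod 2) :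
    (-1 : ℂ) ^ (∑ i ∈ s, f i).val = ∏ i ∈ s, (-1) ^ (f i).val := by
  classical
  induction s using Finset.induction_on with
  | empty => simp
  | insert i s hi ih => rw [Finset.sum_insert hi, Finset.prod_insert hi, neg_one_pow_val_add, ih]

theorem sum_neg_one_pow_val_mul (w : ZMod 2) :
    ∑ c : ZMod 2, (-1 : ℂ) ^ (c * w).val = if w = 0 then 2 else 0 := by
  have key (f : ZMod 2 → ℂ) : ∑ c, f c = f 0 + f 1 := Fin.sum_univ_two f
  have hw : w = 0 ∨ w = 1 := by revert w; decide
  rcases hw with rfl | rfl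
  · rw [key]; norm_num
  · rw [key]; simp [ZMod.val_one]

/-- Orthogonality of the characters of `(ZMod 2)^m`. -/
theorem sum_neg_one_pow_dot (m : ℕ) (w : Fin m → ZMod 2) :
    ∑ b : Fin m → ZMod 2, (-1 : ℂ) ^ (∑ i, b i * w i).val = if w = 0 then 2 ^ m else 0 := by
  simp_rw [neg_one_pow_val_sum]
  rw [← Fintype.prod_sum fun i (c : ZMod 2) => (-1 : ℂ) ^ (c * w i).val]
  simp_rw [sum_neg_one_pow_val_mul]
  split_ifs with h
  · simp [h]
  · obtain ⟨i, hi⟩ := Function.ne_iff.mp h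
    exact Finset.prod_eq_zero (Finset.mem_univ i) (if_neg hi)

theorem pauliU_mul_mul_conjTranspose_apply (m : ℕ) (a b : Fin m → ZMod 2)
    (M : Matrix (Fin m → ZMod 2) (Fin m → ZMod 2) ℂ) (x z : Fin m → ZMod 2) :
    (pauliU m a b * M * (pauliU m a b)ᴴ) x z =
      M (x - a) (z - a) * (-1) ^ (∑ i, b i * (x - z) i).val := by
  have hsum : ∑ i, b i * (x - z) i = ∑ i, b i * (x - a) i + ∑ i, b i * (z - a) i := by
    rw [← Finset.sum_add_distrib]
    refine Finset.sum_congr rfl fun i _ => ?_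
    simp only [Pi.sub_apply, CharTwo.sub_eq_add]
    linear_combination (-(b i * a i)) * CharTwo.two_eq_zero (R := ZMod 2)
  rw [hsum, neg_one_pow_val_add]
  simp only [Matrix.mul_apply, Matrix.conjTranspose_apply, pauliU, ← sub_eq_iff_eq_add]
  simp [apply_ite]
  ring

/-- General (mixed-state) form of the quantum one-time pad lemma: averaging the
one-time pad encryption of an arbitrary matrix `M` over all keys yields
`(Tr M / 2^m) · I`. -/
theorem qotp_maximally_mixed (m : ℕ)
    (M : Matrix (Fin m → ZMod 2) (Fin m → ZMod 2) ℂ) :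
    (1 / 2 ^ (2 * m) : ℂ) •
      ∑ a : Fin m → ZMod 2, ∑ b : Fin m → ZMod 2,
        pauliU m a b * M * (pauliU m a b)ᴴ
      = (M.trace / 2 ^ m) • (1 : Matrix (Fin m → ZMod 2) (Fin m → ZMod 2) ℂ) := by
  ext x z
  have hsum : ∑ a : Fin m → ZMod 2, M (x - a) (x - a) = M.trace :=
    (Equiv.subLeft x).sum_comp fun y => M y y
  simp only [Matrix.smul_apply, Matrix.sum_apply, pauliU_mul_mul_conjTranspose_apply,
    ← Finset.mul_sum, sum_neg_one_pow_dot, sub_eq_zero, Matrix.one_apply, smul_eq_mul]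
  split_ifs with h
  · subst h
    rw [← Finset.sum_mul, hsum, two_mul, pow_add]
    field_simp
  · simp
end

section
/- Perfect security of secret sharing against superposition attacks (Theorem 1 of Damgård–Funder–Nielsen–Salvail, as proved in the appendix): Let n, k ∈ ℕ, let 𝕊 be a type of secrets, R a finite type of randomness, and p : R → ℝ with p(r) ≥ 0 for all r. For each party i ∈ Fin n let v_i : 𝕊 → R → {0,1}^k be its share. For A ⊆ Fin n define the padded joint view w_A(s, r) : Fin n → {0,1}^k by w_A(s,r)(i) = v_i(s, r) if i ∈ A and the all-zero string otherwise. Let F be a family of subsets of Fin n, and assume perfect security against classical F²-attacks: for all A, A' ∈ F, all s, s' ∈ 𝕊, and every u : Fin n → {0,1}^k, Σ_{r : ∀ i ∈ A ∪ A', v_i(s, r) = u(i)} p(r) = Σ_{r : ∀ i ∈ A ∪ A', v_i(s', r) = u(i)} p(r). Let X be a finite type (the adversary's environment register) and let α : X × Finset(Fin n) × (Fin n → {0,1}^k) → ℂ be arbitrary amplitudes. For s ∈ 𝕊 and r ∈ R define the vector ψ_s(r) = Σ_{x ∈ X} Σ_{A ∈ F} Σ_{a : Fin n → {0,1}^k}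 α(x, A, a) · e_{(x, A, a ⊕ w_A(s,r))} in ℂ^(X × Finset(Fin n) × (Fin n → {0,1}^k)), where ⊕ is componentwise bitwise XOR, and define the adversary's final state ρ_s = Σ_{r ∈ R} p(r) · ψ_s(r) ψ_s(r)^*. Then for all s, s' ∈ 𝕊, ρ_s = ρ_{s'}; that is, the scheme is perfectly secure against superposition F-attacks. -/
open scoped BigOperators

/-- The padded joint view of the parties in `A`: party `i`'s share if `i ∈ A`,
and the all-zero string otherwise. -/
def paddedView (n k : ℕ) {𝕊 R : Type*}
    (v : Fin n → 𝕊 → R → (Fin k → ZMod 2))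
    (A : Finset (Fin n)) (s : 𝕊) (r : R) : Fin n → (Fin k → ZMod 2) :=
  fun i => if i ∈ A then v i s r else 0

/-- The state `ψ_s(r)` obtained from the adversary's superposition query:
`∑_{x, A ∈ F, a} α(x, A, a) · e_{(x, A, a ⊕ w_A(s,r))}`. -/
noncomputable def advQueryState (n k : ℕ) {𝕊 R X : Type*} [DecidableEq X]
    (v : Fin n → 𝕊 → R → (Fin k → ZMod 2)) (F : Finset (Finset (Fin n)))
    (α : X × Finset (Fin n) × (Fin n → Fin k → ZMod 2) → ℂ)
    (s : 𝕊) (r : R) [Fintype X] :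
    X × Finset (Fin n) × (Fin n → Fin k → ZMod 2) → ℂ :=
  ∑ x : X, ∑ A ∈ F, ∑ a : Fin n → Fin k → ZMod 2,
    α (x, A, a) •
      (Pi.single (x, A, a + paddedView n k v A s r) 1 :
        X × Finset (Fin n) × (Fin n → Fin k → ZMod 2) → ℂ)

theorem paddedView_eq_iff (n k : ℕ) {𝕊 R : Type*}
    (v : Fin n → 𝕊 → R → (Fin k → ZMod 2)) (B : Finset (Fin n)) (s : 𝕊) (r : R)
    (u : Fin n → Fin k → ZMod 2) :
    paddedView n k v B s r = u ↔ (∀ i ∈ B, v i s r = u i) ∧ ∀ i ∉ B, u i = 0 := by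
  constructor
  · rintro rfl
    exact ⟨fun i hi => by simp [paddedView, hi], fun i hi => by simp [paddedView, hi]⟩
  · rintro ⟨h₁, h₂⟩
    funext i
    by_cases hi : i ∈ B
    · simp [paddedView, hi, h₁ i hi]
    · simp [paddedView, hi, h₂ i hi]

/-- The padded view of a subset is the restriction of the padded view of the larger set. -/
theorem paddedView_of_subset (n k : ℕ) {𝕊 R : Type*}
    (v : Fin n → 𝕊 → R → (Fin k → ZMod 2)) {A B : Finset (Fin n)} (h : A ⊆ B) (s : 𝕊) (r : R) :
    paddedView n k v A s r = fun i => if i ∈ A then paddedView n k v B s r i else 0 := by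
  funext i
  by_cases hi : i ∈ A
  · simp [paddedView, hi, h hi]
  · simp [paddedView, hi]

theorem advQueryState_apply (n k : ℕ) {𝕊 R X : Type*} [DecidableEq X] [Fintype X]
    (v : Fin n → 𝕊 → R → (Fin k → ZMod 2)) (F : Finset (Finset (Fin n)))
    (α : X × Finset (Fin n) × (Fin n → Fin k → ZMod 2) → ℂ) (s : 𝕊) (r : R)
    (x : X) (A : Finset (Fin n)) (b : Fin n → Fin k → ZMod 2) :
    advQueryState n k v F α s r (x, A, b)
      = if A ∈ F then α (x, A, b - paddedView n k v A s r) else 0 := by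
  simp only [advQueryState, Finset.sum_apply, Pi.smul_apply, Pi.single_apply, Prod.mk.injEq,
    smul_eq_mul, mul_ite, mul_one, mul_zero, ite_and, ← sub_eq_iff_eq_add]
  rw [Finset.sum_eq_single x (fun y _ hy => by simp [hy.symm]) (by simp)]
  simp

/-- If the joint view of `B` carries no information about the secret, then the expectation of any
function of the padded view of `B` does not depend on the secret. -/
theorem sum_mul_paddedView_eq (n k : ℕ) {𝕊 R : Type*} [Fintype R] (p : R → ℝ)
    (v : Fin n → 𝕊 → R → (Fin k → ZMod 2)) (B : Finset (Fin n)) (s s' : 𝕊)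
    (h : ∀ u : Fin n → (Fin k → ZMod 2),
      ∑ r ∈ Finset.univ.filter (fun r : R => ∀ i ∈ B, v i s r = u i), p r
        = ∑ r ∈ Finset.univ.filter (fun r : R => ∀ i ∈ B, v i s' r = u i), p r)
    (f : (Fin n → Fin k → ZMod 2) → ℂ) :
    ∑ r : R, (p r : ℂ) * f (paddedView n k v B s r)
      = ∑ r : R, (p r : ℂ) * f (paddedView n k v B s' r) := by
  have fiber : ∀ t : 𝕊, ∑ r : R, (p r : ℂ) * f (paddedView n k v B t r)
      = ∑ u, ((∑ r ∈ Finset.univ.filter (fun r : R => paddedView n k v B t r = u), p r : ℝ) : ℂ)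
          * f u := by
    intro t
    rw [← Finset.sum_fiberwise Finset.univ (paddedView n k v B t)]
    refine Finset.sum_congr rfl fun u _ => ?_
    rw [Complex.ofReal_sum, Finset.sum_mul]
    refine Finset.sum_congr rfl fun r hr => ?_
    rw [(Finset.mem_filter.mp hr).2]
  rw [fiber, fiber]
  refine Finset.sum_congr rfl fun u _ => ?_
  congr 2
  simp only [paddedView_eq_iff]
  by_cases hu : ∀ i ∉ B, u i = 0
  · simpa only [and_iff_left hu] using h u
  · simp only [hu, and_false]

/-- Perfect security of secret sharing against superposition attacks
(Theorem 1 of Damgård–Funder–Nielsen–Salvail): if the scheme is perfectly secure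
against classical `F²`-attacks, then the adversary's final state
`ρ_s = ∑_r p(r) ψ_s(r) ψ_s(r)^*` after a superposition `F`-attack does not depend
on the secret `s`. -/
theorem secret_sharing_superposition_secure
    (n k : ℕ) {𝕊 R X : Type*} [Fintype R] [Fintype X] [DecidableEq X]
    (p : R → ℝ) (hp : ∀ r, 0 ≤ p r)
    (v : Fin n → 𝕊 → R → (Fin k → ZMod 2))
    (F : Finset (Finset (Fin n)))
    (hsec : ∀ A ∈ F, ∀ A' ∈ F, ∀ s s' : 𝕊, ∀ u : Fin n → (Fin k → ZMod 2),
      ∑ r ∈ Finset.univ.filter (fun r : R => ∀ i ∈ A ∪ A', v i s r = u i), p r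
        = ∑ r ∈ Finset.univ.filter (fun r : R => ∀ i ∈ A ∪ A', v i s' r = u i), p r)
    (α : X × Finset (Fin n) × (Fin n → Fin k → ZMod 2) → ℂ)
    (s s' : 𝕊) :
    ∑ r : R, (p r : ℂ) •
        Matrix.vecMulVec (advQueryState n k v F α s r) (star (advQueryState n k v F α s r))
      = ∑ r : R, (p r : ℂ) •
        Matrix.vecMulVec (advQueryState n k v F α s' r) (star (advQueryState n k v F α s' r)) := by
  ext ⟨x, A, b⟩ ⟨x', A', b'⟩
  simp only [Matrix.sum_apply, Matrix.smul_apply, Matrix.vecMulVec_apply, Pi.star_apply,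
    advQueryState_apply, smul_eq_mul]
  by_cases hA : A ∈ F
  · by_cases hA' : A' ∈ F
    · simp only [hA, hA', if_true,
        paddedView_of_subset n k v (Finset.subset_union_left : A ⊆ A ∪ A'),
        paddedView_of_subset n k v (Finset.subset_union_right : A' ⊆ A ∪ A')]
      exact sum_mul_paddedView_eq n k p v (A ∪ A') s s' (hsec A hA A' hA' s s')
        (fun w => α (x, A, b - fun i => if i ∈ A then w i else 0) *
          star (α (x', A', b' - fun i => if i ∈ A' then w i else 0)))
    · simp [hA']
  · simp [hA]
end

section
/- Soundness of the Hamiltonian verification test: Let N and J be finite types, d : J → ℝ, and S : J → Matrix N N ℂ with each S_j Hermitian. Set Σ = Σ_{j ∈ J} |d_j|, assume Σ > 0, let H = Σ_{j ∈ J} d_j · S_j and p_j = |d_j|/Σ. Let b ∈ ℝ and assume H − b·I is positive semidefinite (i.e., every eigenvalue of H is at least b). Then for every density matrix ρ (a Hermitian positive semidefinite N × N complex matrix with Tr ρ = 1), the acceptance probability satisfies Σ_{j ∈ J} p_j · Tr[((I − sign(d_j) · S_j)/2) · ρ] ≤ 1/2 − b/(2Σ). -/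
open scoped BigOperators ComplexOrder

open scoped MatrixOrder in
/-- The trace of a product of two positive semidefinite matrices is nonnegative. -/
theorem Matrix.PosSemidef.trace_mul_nonneg {n 𝕜 : Type*} [Fintype n] [RCLike 𝕜]
    {A B : Matrix n n 𝕜} (hA : A.PosSemidef) (hB : B.PosSemidef) : 0 ≤ (A * B).trace := by
  classical
  obtain ⟨C, rfl⟩ := CStarAlgebra.nonneg_iff_eq_star_mul_self.mp hB.nonneg
  rw [← Matrix.mul_assoc, Matrix.trace_mul_comm, ← Matrix.mul_assoc]
  exact (hA.mul_mul_conjTranspose_same C).trace_nonneg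

theorem Real.abs_mul_sign (x : ℝ) : |x| * Real.sign x = x := by
  rcases lt_trichotomy x 0 with h | rfl | h
  · simp [Real.sign_of_neg h, abs_of_neg h]
  · simp
  · simp [Real.sign_of_pos h, abs_of_pos h]

/-- Soundness of the Hamiltonian verification test: if every eigenvalue of
`H = ∑_j d_j S_j` is at least `b` (i.e. `H - b·I` is positive semidefinite),
then on any density matrix `ρ` the test accepts with probability at most
`1/2 - b/(2Σ)`. -/
theorem hamiltonian_test_soundness
    {N J : Type*} [Fintype N] [Fintype J] [DecidableEq N]
    (d : J → ℝ) (S : J → Matrix N N ℂ)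
    (hHerm : ∀ j, (S j).IsHermitian)
    (hpos : 0 < ∑ j, |d j|)
    (b : ℝ)
    (hb : ((∑ j, (d j : ℂ) • S j) - (b : ℂ) • (1 : Matrix N N ℂ)).PosSemidef)
    (ρ : Matrix N N ℂ) (hρ : ρ.PosSemidef) (hρtr : ρ.trace = 1) :
    ∑ j, (|d j| / ∑ j', |d j'|) *
        ((((2 : ℂ)⁻¹ • ((1 : Matrix N N ℂ) - (Real.sign (d j) : ℂ) • S j)) * ρ).trace).re
      ≤ 1 / 2 - b / (2 * ∑ j, |d j|) := by
  have energy_ge : b ≤ ∑ j, d j * (S j * ρ).trace.re := by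
    have h := (Complex.le_def.mp (hb.trace_mul_nonneg hρ)).1
    simpa [Matrix.sub_mul, Matrix.sum_mul, Matrix.trace_sum, hρtr] using h
  have term_eq (j : J) : (|d j| / ∑ j', |d j'|) *
      ((((2 : ℂ)⁻¹ • ((1 : Matrix N N ℂ) - (Real.sign (d j) : ℂ) • S j)) * ρ).trace).re =
      (|d j| - d j * (S j * ρ).trace.re) / (2 * ∑ j', |d j'|) := by
    have trace_re : ((((2 : ℂ)⁻¹ • ((1 : Matrix N N ℂ) - (Real.sign (d j) : ℂ) • S j)) *
        ρ).trace).re = (1 - Real.sign (d j) * (S j * ρ).trace.re) / 2 := by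
      have half : (2 : ℂ)⁻¹ = ((2⁻¹ : ℝ) : ℂ) := by push_cast; rfl
      rw [half, Matrix.smul_mul, Matrix.trace_smul, smul_eq_mul, Complex.re_ofReal_mul,
        Matrix.sub_mul, Matrix.trace_sub, Matrix.one_mul, hρtr, Matrix.smul_mul,
        Matrix.trace_smul, smul_eq_mul, Complex.sub_re, Complex.re_ofReal_mul, Complex.one_re]
      ring
    rw [trace_re]
    field_simp
    linear_combination -(S j * ρ).trace.re * Real.abs_mul_sign (d j)
  rw [Finset.sum_congr rfl fun j _ => term_eq j, ← Finset.sum_div, Finset.sum_sub_distrib]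
  calc (∑ j, |d j| - ∑ j, d j * (S j * ρ).trace.re) / (2 * ∑ j, |d j|)
      ≤ (∑ j, |d j| - b) / (2 * ∑ j, |d j|) := by gcongr
    _ = 1 / 2 - b / (2 * ∑ j, |d j|) := by field_simp
end
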